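/- arXiv:2211.15922 — 6 statements merged into one kernel-verified Lean document; each statement's English description precedes it below -/
import Mathlib

section
/- In any residuated lattice L, for all x, y ∈ L the intersection of the filters generated by x and by y equals the filter generated by x ∨ y, i.e. ⟨x⟩ ∩ ⟨y⟩ = ⟨x ∨ y⟩. -/
/-- A residuated lattice: a bounded lattice with a commutative monoid
operation `mul` whose identity is the top element, and a residuum `himp`
satisfying `mul x y ≤ z ↔ x ≤ himp y z`. Here `⊤` plays the role of `1`
and `⊥` the role of `0`. -/
class ResiduatedLattice (L : Type*) extends Lattice L, BoundedOrder L where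
  mul : L → L → L
  himp : L → L → L
  mul_comm : ∀ x y : L, mul x y = mul y x
  mul_assoc : ∀ x y z : L, mul (mul x y) z = mul x (mul y z)
  mul_top : ∀ x : L, mul x ⊤ = x
  residuation : ∀ x y z : L, mul x y ≤ z ↔ x ≤ himp y z

namespace ResiduatedLattice

variable {L : Type*} [ResiduatedLattice L]

/-- A filter of a residuated lattice: a nonempty, upward closed subset
closed under `mul`. -/
def IsFilter (F : Set L) : Prop :=
  F.Nonempty ∧ (∀ x y : L, x ∈ F → x ≤ y → y ∈ F) ∧
    ∀ x y : L, x ∈ F → y ∈ F → mul x y ∈ F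

/-- A prime filter: a proper filter such that `x ⊔ y ∈ P` implies
`x ∈ P` or `y ∈ P`. -/
def IsPrimeFilter (P : Set L) : Prop :=
  IsFilter P ∧ P ≠ Set.univ ∧ ∀ x y : L, x ⊔ y ∈ P → x ∈ P ∨ y ∈ P

/-- `filterGen X` is the smallest filter containing `X`. -/
def filterGen (X : Set L) : Set L := ⋂₀ {F : Set L | IsFilter F ∧ X ⊆ F}

/-- The prime spectrum: the set of all prime filters. -/
def Spectrum (L : Type*) [ResiduatedLattice L] := {P : Set L // IsPrimeFilter P}

/-- `D X = {P ∈ Spec L | X ⊄ P}`. -/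
def D (X : Set L) : Set (Spectrum L) := {P : Spectrum L | ¬ X ⊆ P.1}

/-- `O P = {x | a ⊔ x = 1 for some a ∉ P}`. -/
def O (P : Set L) : Set L := {x : L | ∃ a ∉ P, a ⊔ x = ⊤}

/-- The congruence relation associated to a filter `F`:
`x ≡_F y` iff `(x → y) ⊗ (y → x) ∈ F`. -/
def rel (F : Set L) (x y : L) : Prop := mul (himp x y) (himp y x) ∈ F

end ResiduatedLattice

namespace ResiduatedLattice

theorem aux_mul_le {L : Type*} [ResiduatedLattice L] (a b : L) : mul a b ≤ b := by
  rw [residuation]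
  refine le_trans le_top ?_
  rw [← residuation, mul_comm, mul_top]

theorem aux_sup {L : Type*} [ResiduatedLattice L] (a a' b : L) :
    mul (a ⊔ b) (a' ⊔ b) ≤ mul a a' ⊔ b := by
  rw [residuation]
  refine sup_le ?_ ?_
  · rw [← residuation, mul_comm, residuation]
    refine sup_le ?_ ?_
    · rw [← residuation, mul_comm]
      exact le_sup_left
    · rw [← residuation, mul_comm]
      exact le_trans (aux_mul_le a b) le_sup_right
  · rw [← residuation, mul_comm]
    exact le_trans (aux_mul_le _ b) le_sup_right

theorem aux_filter {L : Type*} [ResiduatedLattice L] {F : Set L} (hF : IsFilter F) (b : L) :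
    IsFilter {a : L | a ⊔ b ∈ F} := by
  obtain ⟨⟨c, hc⟩, hu, hm⟩ := hF
  refine ⟨⟨c, hu _ _ hc le_sup_left⟩, ?_, ?_⟩
  · intro p q hp hpq
    exact hu _ _ hp (sup_le_sup_right hpq b)
  · intro p q hp hq
    exact hu _ _ (hm _ _ hp hq) (aux_sup p q b)

/-- `⟨x⟩ ∩ ⟨y⟩ = ⟨x ∨ y⟩`. -/
theorem filterGen_inter_filterGen {L : Type*} [ResiduatedLattice L] (x y : L) :
    filterGen {x} ∩ filterGen {y} = filterGen ({x ⊔ y} : Set L) := by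
  ext z
  constructor
  · rintro ⟨hx, hy⟩ F ⟨hF, hxy⟩
    have h1 : z ⊔ y ∈ F :=
      hx _ ⟨aux_filter hF y, by simpa using hxy⟩
    have h2 : z ⊔ z ∈ F :=
      hy _ ⟨aux_filter hF z, by simpa [sup_comm] using h1⟩
    simpa using h2
  · intro h
    refine ⟨?_, ?_⟩
    · rintro F ⟨hF, hx⟩
      refine h F ⟨hF, ?_⟩
      rw [Set.singleton_subset_iff] at hx ⊢
      exact hF.2.1 _ _ hx le_sup_left
    · rintro F ⟨hF, hx⟩
      refine h F ⟨hF, ?_⟩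
      rw [Set.singleton_subset_iff] at hx ⊢
      exact hF.2.1 _ _ hx le_sup_right

end ResiduatedLattice
end

section
/- Let L be a residuated lattice and P ∈ Spec(L). Then O(P) = {x ∈ L : a ∨ x = 1 for some a ∈ L − P} is a proper filter of L and O(P) ⊆ P. -/
namespace ResiduatedLattice

/-- for a prime filter `P`, the set
`O(P) = {x | a ∨ x = 1 for some a ∉ P}` is a proper filter contained in `P`. -/
theorem O_isProperFilter_subset {L : Type*} [ResiduatedLattice L]
    (P : Set L) (hP : IsPrimeFilter P) :
    IsFilter (O P) ∧ O P ≠ Set.univ ∧ O P ⊆ P := by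
  obtain ⟨⟨⟨p, hp⟩, hup, hmul⟩, hne, hprime⟩ := hP
  have htop : (⊤ : L) ∈ P := hup p ⊤ hp le_top
  have hsub : O P ⊆ P := by
    rintro x ⟨a, ha, hax⟩
    exact (hprime a x (hax ▸ htop)).resolve_left ha
  obtain ⟨q, hq⟩ := (Set.ne_univ_iff_exists_notMem P).1 hne
  have htm : ∀ c : L, mul ⊤ c = c := fun c => by rw [mul_comm, mul_top]
  have hle : ∀ c y : L, mul c y ≤ c := by
    intro c y
    rw [mul_comm, residuation]
    exact le_top.trans ((residuation _ _ _).1 (htm c).le)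
  refine ⟨⟨⟨⊤, q, hq, sup_top_eq q⟩, ?_, ?_⟩, ?_, hsub⟩
  · rintro x y ⟨a, ha, hax⟩ hxy
    exact ⟨a, ha, top_le_iff.1 (hax ▸ sup_le_sup_left hxy a)⟩
  · rintro x y ⟨a, ha, hax⟩ ⟨b, hb, hby⟩
    refine ⟨a ⊔ b, fun h => (hprime a b h).elim ha hb, ?_⟩
    have h1 : a ⊔ x ≤ himp y (a ⊔ b ⊔ mul x y) :=
      sup_le ((residuation _ _ _).1 ((hle a y).trans (le_sup_left.trans le_sup_left)))
        ((residuation _ _ _).1 le_sup_right)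
    rw [hax, ← residuation, htm] at h1
    have h2 : b ⊔ y ≤ a ⊔ b ⊔ mul x y := sup_le (le_sup_right.trans le_sup_left) h1
    rw [hby] at h2
    exact top_le_iff.1 h2
  · intro h
    exact hq (hsub (h ▸ Set.mem_univ q))

end ResiduatedLattice
end

section
/- Let L be a residuated lattice. Let E_L be the disjoint union (sigma type) over P ∈ Spec(L) of the quotients L/O(P), and for a ∈ L and P ∈ Spec(L) write a_P for the class of a in L/O(P). Then the family B = {D(F, a) : F a filter of L, a ∈ L}, where D(F, a) = {a_P : P ∈ D(F)}, is a base for a topology on E_L: every point of E_L lies in some member of B, and for any D₁, D₂ ∈ B and x ∈ D₁ ∩ D₂ there exists D ∈ B with x ∈ D ⊆ D₁ ∩ D₂. -/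
namespace ResiduatedLattice

variable {L : Type*} [ResiduatedLattice L]

/-- The family of sets of the form `D X`, the open sets of the Stone topology. -/
def stoneOpens (L : Type*) [ResiduatedLattice L] : Set (Set (Spectrum L)) :=
  {U : Set (Spectrum L) | ∃ X : Set L, U = D X}

/-- The Stone topology on `Spec(L)`, whose open sets are exactly the `D X`. -/
instance : TopologicalSpace (Spectrum L) :=
  TopologicalSpace.generateFrom (stoneOpens L)

/-- The total space `E_L`: the disjoint union over `P ∈ Spec(L)` of the
quotients `L/O(P)` (quotient by the relation `x ≡ y` iff
`(x → y) ⊗ (y → x) ∈ O(P)`). -/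
def EL (L : Type*) [ResiduatedLattice L] :=
  (P : Spectrum L) × Quot (rel (O P.1))

/-- `a_P`, the class of `a` in the stalk `L/O(P)`, viewed in `E_L`. -/
def stalkMk (P : Spectrum L) (a : L) : EL L := ⟨P, Quot.mk _ a⟩

/-- The canonical projection `π : E_L → Spec(L)`, `a_P ↦ P`. -/
def proj (L : Type*) [ResiduatedLattice L] : EL L → Spectrum L := fun e => e.1

/-- `D(F, a) = {a_P : P ∈ D(F)}`. -/
def DFa (F : Set L) (a : L) : Set (EL L) :=
  {e : EL L | ∃ P ∈ D F, e = stalkMk P a}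

/-- The base `B = {D(F, a) : F a filter of L, a ∈ L}` for the topology on `E_L`. -/
def ELBase (L : Type*) [ResiduatedLattice L] : Set (Set (EL L)) :=
  {S : Set (EL L) | ∃ (F : Set L) (a : L), IsFilter F ∧ S = DFa F a}

/-- The topology `T(B)` on `E_L` generated by the base `B`. -/
instance : TopologicalSpace (EL L) :=
  TopologicalSpace.generateFrom (ELBase L)

end ResiduatedLattice

namespace ResiduatedLattice

theorem filterGen_isFilter_aux {L : Type*} [ResiduatedLattice L] (X : Set L) :
    IsFilter (filterGen X) := by
  refine ⟨⟨⊤, ?_⟩, ?_, ?_⟩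
  · rintro F ⟨⟨⟨x, hx⟩, h2, _⟩, _⟩
    exact h2 x ⊤ hx le_top
  · intro x y hx hxy F hF
    exact hF.1.2.1 x y (hx F hF) hxy
  · intro x y hx hy F hF
    exact hF.1.2.2 x y (hx F hF) (hy F hF)

theorem mem_D_filterGen_aux {L : Type*} [ResiduatedLattice L] (d : L) (Q : Spectrum L) :
    Q ∈ D (filterGen {d}) ↔ d ∉ Q.1 := by
  constructor
  · intro h hd
    exact h fun x hx => hx Q.1 ⟨Q.2.1, Set.singleton_subset_iff.2 hd⟩
  · intro hd h
    exact hd (h fun F hF => hF.2 rfl)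

theorem sup_notMem_aux {L : Type*} [ResiduatedLattice L] (Q : Spectrum L) (x y : L) :
    x ⊔ y ∉ Q.1 ↔ x ∉ Q.1 ∧ y ∉ Q.1 := by
  constructor
  · intro h
    exact ⟨fun hx => h (Q.2.1.2.1 _ _ hx le_sup_left),
      fun hy => h (Q.2.1.2.1 _ _ hy le_sup_right)⟩
  · rintro ⟨hx, hy⟩ h
    exact (Q.2.2.2 x y h).elim hx hy

theorem eqvGen_aux {L : Type*} [ResiduatedLattice L] (P : Spectrum L) (a b : L)
    (h : Relation.EqvGen (rel (O P.1)) a b) :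
    ∃ c ∉ P.1, ∀ Q : Spectrum L, c ∉ Q.1 → stalkMk Q a = stalkMk Q b := by
  induction h with
  | rel x y h =>
    obtain ⟨c, hc, hct⟩ := h
    refine ⟨c, hc, fun Q hQ => ?_⟩
    have : Quot.mk (rel (O Q.1)) x = Quot.mk _ y := Quot.sound ⟨c, hQ, hct⟩
    unfold stalkMk
    rw [this]
  | refl x =>
    obtain ⟨c, hc⟩ := (Set.ne_univ_iff_exists_notMem _).1 P.2.2.1
    exact ⟨c, hc, fun _ _ => rfl⟩
  | symm x y _ ih =>
    obtain ⟨c, hc, h⟩ := ih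
    exact ⟨c, hc, fun Q hQ => (h Q hQ).symm⟩
  | trans x y z _ _ ih1 ih2 =>
    obtain ⟨c, hc, h⟩ := ih1
    obtain ⟨c', hc', h'⟩ := ih2
    refine ⟨c ⊔ c', (sup_notMem_aux P c c').2 ⟨hc, hc'⟩, fun Q hQ => ?_⟩
    have := (sup_notMem_aux Q c c').1 hQ
    exact (h Q this.1).trans (h' Q this.2)

/-- the family `B = {D(F, a)}` is a base for a topology on
`E_L`: every point lies in some member of `B`, and for `D₁, D₂ ∈ B` and
`x ∈ D₁ ∩ D₂` there is `D ∈ B` with `x ∈ D ⊆ D₁ ∩ D₂`. -/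
theorem ELBase_isBase (L : Type*) [ResiduatedLattice L] :
    (∀ e : EL L, ∃ S ∈ ELBase L, e ∈ S) ∧
      ∀ S₁ ∈ ELBase L, ∀ S₂ ∈ ELBase L, ∀ e ∈ S₁ ∩ S₂,
        ∃ S ∈ ELBase L, e ∈ S ∧ S ⊆ S₁ ∩ S₂ := by
  constructor
  · rintro ⟨P, q⟩
    induction q using Quot.ind with
    | mk a =>
      refine ⟨DFa Set.univ a, ⟨Set.univ, a, ⟨⟨⊤, trivial⟩, fun _ _ _ _ => trivial,
        fun _ _ _ _ => trivial⟩, rfl⟩, P, ?_, rfl⟩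
      intro h
      exact P.2.2.1 (Set.univ_subset_iff.1 h)
  · rintro _ ⟨F₁, a, hF₁, rfl⟩ _ ⟨F₂, b, hF₂, rfl⟩ e ⟨⟨P, hP1, rfl⟩, ⟨P', hP2, he⟩⟩
    have hPP : P = P' := congrArg Sigma.fst he
    subst hPP
    have hq : Quot.mk (rel (O P.1)) a = Quot.mk _ b := eq_of_heq (Sigma.mk.inj he).2
    obtain ⟨c, hc, hcQ⟩ := eqvGen_aux P a b (Quot.eqvGen_exact hq)
    obtain ⟨f₁, hf₁, hf₁P⟩ := Set.not_subset.1 hP1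
    obtain ⟨f₂, hf₂, hf₂P⟩ := Set.not_subset.1 hP2
    refine ⟨DFa (filterGen {f₁ ⊔ f₂ ⊔ c}) a, ⟨_, a, filterGen_isFilter_aux _, rfl⟩,
      ⟨P, ?_, rfl⟩, ?_⟩
    · rw [mem_D_filterGen_aux, sup_notMem_aux, sup_notMem_aux]
      exact ⟨⟨hf₁P, hf₂P⟩, hc⟩
    · rintro _ ⟨Q, hQ, rfl⟩
      rw [mem_D_filterGen_aux, sup_notMem_aux, sup_notMem_aux] at hQ
      exact ⟨⟨Q, fun h => hQ.1.1 (h hf₁), rfl⟩, ⟨Q, fun h => hQ.1.2 (h hf₂), hcQ Q hQ.2⟩⟩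

end ResiduatedLattice
end

section
/- Let L be a residuated lattice, E_L the disjoint union over P ∈ Spec(L) of the quotients L/O(P), equipped with the topology T(B) generated by the base B = {D(F, a) : F a filter of L, a ∈ L}, where D(F, a) = {a_P : P ∈ D(F)}, and let Spec(L) carry the Stone topology. Then the canonical projection π : E_L → Spec(L), a_P ↦ P, is a surjective local homeomorphism: for every e ∈ E_L there exist open neighbourhoods U of e and U′ of π(e) such that π maps U homeomorphically onto U′. -/
namespace ResiduatedLattice

section aux

variable {L : Type*} [ResiduatedLattice L]

theorem aux_mono_left {x y : L} (z : L) (h : x ≤ y) : mul x z ≤ mul y z :=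
  (residuation _ _ _).2 (h.trans ((residuation _ _ _).1 le_rfl))

theorem aux_mono {x y z w : L} (h : x ≤ y) (k : z ≤ w) : mul x z ≤ mul y w := by
  refine (aux_mono_left z h).trans ?_
  rw [mul_comm y z, mul_comm y w]
  exact aux_mono_left y k

theorem aux_mul_le_left (x y : L) : mul x y ≤ x := by
  have := aux_mono (le_refl x) (le_top : y ≤ ⊤)
  rwa [mul_top] at this

theorem aux_mul_le_right (x y : L) : mul x y ≤ y := by
  rw [mul_comm]; exact aux_mul_le_left y x

theorem aux_sup_mul_le {x y z w : L} (h : mul x z ≤ w) (k : mul y z ≤ w) :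
    mul (x ⊔ y) z ≤ w :=
  (residuation _ _ _).2 (sup_le ((residuation _ _ _).1 h) ((residuation _ _ _).1 k))

theorem aux_sup_mul_sup (d x e y : L) : mul (d ⊔ x) (e ⊔ y) ≤ (d ⊔ e) ⊔ mul x y := by
  apply aux_sup_mul_le
  · exact (aux_mul_le_left _ _).trans (le_sup_left.trans le_sup_left)
  · rw [mul_comm x]
    apply aux_sup_mul_le
    · exact (aux_mul_le_left _ _).trans (le_sup_right.trans le_sup_left)
    · rw [mul_comm y x]; exact le_sup_right

theorem aux_himp_self (x : L) : himp x x = ⊤ :=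
  top_le_iff.1 ((residuation _ _ _).1 (aux_mul_le_right _ _))

theorem aux_himp_mul (x y : L) : mul (himp x y) x ≤ y :=
  (residuation _ _ _).2 le_rfl

theorem aux_himp_trans (x y z : L) : mul (himp x y) (himp y z) ≤ himp x z := by
  apply (residuation _ _ _).1
  rw [mul_comm (himp x y), mul_assoc]
  exact (aux_mono le_rfl (aux_himp_mul x y)).trans (aux_himp_mul y z)

theorem aux_top_mem {F : Set L} (h : IsFilter F) : (⊤ : L) ∈ F := by
  obtain ⟨x, hx⟩ := h.1
  exact h.2.1 x ⊤ hx le_top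

theorem aux_O_filter (P : Spectrum L) : IsFilter (O P.1) := by
  obtain ⟨P, hP, hne, hpr⟩ := P
  refine ⟨⟨⊤, ?_⟩, ?_, ?_⟩
  · obtain ⟨a, ha⟩ := (Set.ne_univ_iff_exists_notMem P).1 hne
    exact ⟨a, ha, by simp⟩
  · rintro x y ⟨a, ha, h⟩ hxy
    exact ⟨a, ha, top_le_iff.1 (h ▸ sup_le_sup_left hxy a)⟩
  · rintro x y ⟨d, hd, h⟩ ⟨e, he, k⟩
    refine ⟨d ⊔ e, fun hh => (hpr d e hh).elim hd he, top_le_iff.1 ?_⟩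
    have := aux_sup_mul_sup d x e y
    rwa [h, k, mul_top] at this

theorem aux_rel_equiv {F : Set L} (h : IsFilter F) : Equivalence (rel F) := by
  refine ⟨fun x => ?_, fun {x y} hh => ?_, fun {x y z} hh kk => ?_⟩
  · unfold rel
    rw [aux_himp_self, mul_top]; exact aux_top_mem h
  · unfold rel at *
    rwa [mul_comm]
  · unfold rel at *
    have h1 := h.2.1 _ _ hh (aux_mul_le_left _ _)
    have h2 := h.2.1 _ _ hh (aux_mul_le_right _ _)
    have h3 := h.2.1 _ _ kk (aux_mul_le_left _ _)
    have h4 := h.2.1 _ _ kk (aux_mul_le_right _ _)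
    exact h.2.2 _ _ (h.2.1 _ _ (h.2.2 _ _ h1 h3) (aux_himp_trans _ _ _))
      (h.2.1 _ _ (h.2.2 _ _ h4 h2) (aux_himp_trans _ _ _))

theorem aux_stalk_eq (P : Spectrum L) (a b : L) :
    stalkMk P a = stalkMk P b ↔ rel (O P.1) a b := by
  constructor
  · intro h
    unfold stalkMk at h
    have h' := eq_of_heq (Sigma.mk.inj h).2
    have := Quot.eqvGen_exact h'
    exact (aux_rel_equiv (aux_O_filter P)).eqvGen_iff.1 this
  · intro h
    unfold stalkMk
    rw [Quot.sound h]

theorem aux_isOpen_D (X : Set L) : IsOpen (D X) :=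
  TopologicalSpace.isOpen_generateFrom_of_mem ⟨X, rfl⟩

theorem aux_isOpen_DFa {F : Set L} (h : IsFilter F) (a : L) : IsOpen (DFa F a) :=
  TopologicalSpace.isOpen_generateFrom_of_mem ⟨F, a, h, rfl⟩

theorem aux_section_cont (a : L) : Continuous (fun P : Spectrum L => stalkMk P a) := by
  refine continuous_generateFrom_iff.2 ?_
  rintro _ ⟨F, b, hF, rfl⟩
  have : (fun P : Spectrum L => stalkMk P a) ⁻¹' DFa F b =
      D F ∩ ⋃ d ∈ {d : L | d ⊔ mul (himp a b) (himp b a) = ⊤}, D {d} := by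
    ext P
    simp only [Set.mem_preimage, Set.mem_inter_iff, Set.mem_iUnion, Set.mem_ofPred_eq]
    constructor
    · rintro ⟨Q, hQ, h⟩
      obtain rfl : P = Q := congrArg (proj L) h
      obtain ⟨d, hd, hh⟩ := (aux_stalk_eq P a b).1 h
      exact ⟨hQ, d, hh, fun hs => hd (hs rfl)⟩
    · rintro ⟨hP, d, hh, hd⟩
      refine ⟨P, hP, (aux_stalk_eq P a b).2 ⟨d, fun hs => hd ?_, hh⟩⟩
      exact Set.singleton_subset_iff.2 hs
  rw [this]
  exact (aux_isOpen_D F).inter (isOpen_biUnion fun d _ => aux_isOpen_D _)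

theorem aux_gen_filter (X : Set L) : IsFilter (filterGen X) := by
  refine ⟨⟨⊤, fun F hF => aux_top_mem hF.1⟩, ?_, ?_⟩
  · intro x y hx hxy F hF
    exact hF.1.2.1 x y (hx F hF) hxy
  · intro x y hx hy F hF
    exact hF.1.2.2 x y (hx F hF) (hy F hF)

theorem aux_D_gen (X : Set L) : D (filterGen X) = D X := by
  ext P
  refine not_congr ⟨fun h x hx => h fun F hF => hF.2 hx, fun h x hx => hx P.1 ⟨P.2.1, h⟩⟩

theorem aux_exists_rep (e : EL L) : ∃ a, e = stalkMk (proj L e) a := by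
  obtain ⟨P, q⟩ := e
  obtain ⟨a, rfl⟩ := Quot.exists_rep q
  exact ⟨a, rfl⟩

theorem aux_proj_cont : Continuous (proj L) := by
  refine continuous_generateFrom_iff.2 ?_
  rintro _ ⟨X, rfl⟩
  have : proj L ⁻¹' D X = ⋃ a : L, DFa (filterGen X) a := by
    ext e
    simp only [Set.mem_preimage, Set.mem_iUnion]
    constructor
    · intro h
      obtain ⟨a, ha⟩ := aux_exists_rep e
      exact ⟨a, proj L e, by rwa [aux_D_gen], ha⟩
    · rintro ⟨a, P, hP, rfl⟩
      rwa [aux_D_gen] at hP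
  rw [this]
  exact isOpen_iUnion fun a => aux_isOpen_DFa (aux_gen_filter X) a

theorem aux_range_open (a : L) : IsOpen (Set.range (fun P : Spectrum L => stalkMk P a)) := by
  have : Set.range (fun P : Spectrum L => stalkMk P a) = DFa Set.univ a := by
    ext e
    constructor
    · rintro ⟨P, rfl⟩
      exact ⟨P, fun h => P.2.2.1 (Set.univ_subset_iff.1 h), rfl⟩
    · rintro ⟨P, _, rfl⟩
      exact ⟨P, rfl⟩
  rw [this]
  exact aux_isOpen_DFa ⟨⟨⊤, Set.mem_univ _⟩, fun _ _ _ _ => Set.mem_univ _,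
    fun _ _ _ _ => Set.mem_univ _⟩ a

/-- The local inverse of the projection given by the section of `a`. -/
def auxHomeo (a : L) : OpenPartialHomeomorph (EL L) (Spectrum L) where
  toFun := proj L
  invFun := fun P => stalkMk P a
  source := Set.range (fun P : Spectrum L => stalkMk P a)
  target := Set.univ
  map_source' := fun _ _ => trivial
  map_target' := fun P _ => ⟨P, rfl⟩
  left_inv' := by rintro _ ⟨P, rfl⟩; rfl
  right_inv' := fun _ _ => rfl
  open_source := aux_range_open a
  open_target := isOpen_univ
  continuousOn_toFun := aux_proj_cont.continuousOn
  continuousOn_invFun := (aux_section_cont a).continuousOn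

end aux

/-- the canonical projection `π : E_L → Spec(L)`, `a_P ↦ P`,
is a surjective local homeomorphism. -/
theorem proj_surjective_isLocalHomeomorph (L : Type*) [ResiduatedLattice L] :
    (∀ (P : Spectrum L) (a : L), proj L (stalkMk P a) = P) ∧
      Function.Surjective (proj L) ∧ IsLocalHomeomorph (proj L) := by
  refine ⟨fun _ _ => rfl, fun P => ⟨stalkMk P ⊤, rfl⟩, ?_⟩
  refine IsLocalHomeomorph.mk _ fun e => ?_
  obtain ⟨a, ha⟩ := aux_exists_rep e
  exact ⟨auxHomeo a, ⟨proj L e, ha.symm⟩, fun _ _ => rfl⟩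

end ResiduatedLattice
end

section
/- Let L be a residuated lattice, E_L the disjoint union over P ∈ Spec(L) of the quotients L/O(P), equipped with the topology T(B) generated by the base B = {D(F, a) : F a filter of L, a ∈ L}, where D(F, a) = {a_P : P ∈ D(F)}, and let Spec(L) carry the Stone topology. Then for any a ∈ L, the function â : Spec(L) → E_L defined by â(P) = a_P is continuous and satisfies π(â(P)) = P for all P, where π : E_L → Spec(L) is the canonical projection a_P ↦ P. -/
namespace ResiduatedLattice

theorem eqvGen_open {L : Type*} [ResiduatedLattice L] (P : Spectrum L) (a b : L)
    (h : Relation.EqvGen (rel (O P.1)) a b) :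
    ∃ U : Set (Spectrum L), IsOpen U ∧ P ∈ U ∧
      ∀ Q ∈ U, Relation.EqvGen (rel (O Q.1)) a b := by
  induction h with
  | rel x y h =>
    obtain ⟨c, hc, hx⟩ := h
    refine ⟨D {c}, TopologicalSpace.isOpen_generateFrom_of_mem ⟨{c}, rfl⟩, ?_, ?_⟩
    · intro h
      exact hc (h rfl)
    · intro Q hQ
      refine Relation.EqvGen.rel _ _ ⟨c, ?_, hx⟩
      intro h
      exact hQ (Set.singleton_subset_iff.2 h)
  | refl x => exact ⟨Set.univ, isOpen_univ, trivial, fun Q _ => Relation.EqvGen.refl x⟩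
  | symm x y _ ih =>
    obtain ⟨U, h1, h2, h3⟩ := ih
    exact ⟨U, h1, h2, fun Q hQ => (h3 Q hQ).symm⟩
  | trans x y z _ _ ih1 ih2 =>
    obtain ⟨U, h1, h2, h3⟩ := ih1
    obtain ⟨V, k1, k2, k3⟩ := ih2
    exact ⟨U ∩ V, h1.inter k1, ⟨h2, k2⟩, fun Q hQ => (h3 Q hQ.1).trans _ _ _ (k3 Q hQ.2)⟩

theorem stalkMk_mem_DFa {L : Type*} [ResiduatedLattice L] (P : Spectrum L) (F : Set L) (a b : L) :
    stalkMk P a ∈ DFa F b ↔ P ∈ D F ∧ Relation.EqvGen (rel (O P.1)) a b := by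
  constructor
  · rintro ⟨Q, hQ, h⟩
    have hPQ : P = Q := congrArg (proj L) h
    subst hPQ
    exact ⟨hQ, Quot.eqvGen_exact (eq_of_heq (Sigma.mk.inj h).2)⟩
  · rintro ⟨hP, h⟩
    exact ⟨P, hP, congrArg (Sigma.mk P) (Quot.eqvGen_sound h)⟩

/-- for any `a ∈ L`, the map `â : Spec(L) → E_L`,
`P ↦ a_P`, is continuous and is a section of `π`. -/
theorem section_continuous (L : Type*) [ResiduatedLattice L] (a : L) :
    Continuous (fun P : Spectrum L => stalkMk P a) ∧
      ∀ P : Spectrum L, proj L (stalkMk P a) = P := by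
  refine ⟨continuous_generateFrom_iff.2 ?_, fun P => rfl⟩
  rintro S ⟨F, b, -, rfl⟩
  rw [isOpen_iff_forall_mem_open]
  intro P hP
  obtain ⟨hF, h⟩ := (stalkMk_mem_DFa P F a b).1 hP
  obtain ⟨U, h1, h2, h3⟩ := eqvGen_open P a b h
  refine ⟨D F ∩ U, ?_, ?_, hF, h2⟩
  · intro Q hQ
    exact (stalkMk_mem_DFa Q F a b).2 ⟨hQ.1, h3 Q hQ.2⟩
  · exact (TopologicalSpace.isOpen_generateFrom_of_mem ⟨F, rfl⟩ : IsOpen (D F)).inter h1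

end ResiduatedLattice
end

section
/- Let L be a residuated lattice. Then the intersection of all prime filters of L equals {1}, i.e. ⋂ {P : P ∈ Spec(L)} = {1}. -/
namespace ResiduatedLattice

theorem aux_mul_mono {L : Type*} [ResiduatedLattice L] {a b c : L} (h : a ≤ b) :
    mul a c ≤ mul b c :=
  (residuation _ _ _).2 (h.trans ((residuation _ _ _).1 le_rfl))

theorem aux_mul_le_left_s16 {L : Type*} [ResiduatedLattice L] (a b : L) : mul a b ≤ a := by
  have h := aux_mul_mono (c := a) (le_top : b ≤ ⊤)
  rwa [mul_comm b a, mul_comm ⊤ a, mul_top] at h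

theorem aux_sup_mul {L : Type*} [ResiduatedLattice L] (x z y : L) :
    mul (x ⊔ y) (z ⊔ y) ≤ mul x z ⊔ y := by
  rw [residuation]
  refine sup_le ?_ ?_
  · rw [← residuation, mul_comm, residuation]
    refine sup_le ?_ ?_
    · rw [← residuation, mul_comm]
      exact le_sup_left
    · rw [← residuation]
      exact (aux_mul_le_left_s16 _ _).trans le_sup_right
  · rw [← residuation]
    exact (aux_mul_le_left_s16 _ _).trans le_sup_right

theorem aux_colon {L : Type*} [ResiduatedLattice L] {P : Set L} (hP : IsFilter P) (y : L) :
    IsFilter {z | z ⊔ y ∈ P} := by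
  obtain ⟨⟨p, hp⟩, hu, hm⟩ := hP
  refine ⟨⟨p, hu _ _ hp le_sup_left⟩, ?_, ?_⟩
  · intro u v h huv
    exact hu _ _ h (sup_le_sup_right huv y)
  · intro u v h1 h2
    exact hu _ _ (hm _ _ h1 h2) (aux_sup_mul u v y)

theorem aux_exists {L : Type*} [ResiduatedLattice L] {a : L} (ha : a ≠ ⊤) :
    ∃ P : Set L, IsPrimeFilter P ∧ a ∉ P := by
  have h0 : IsFilter ({⊤} : Set L) := by
    refine ⟨⟨⊤, rfl⟩, ?_, ?_⟩
    · rintro x y rfl h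
      exact top_le_iff.1 h
    · rintro x y rfl rfl
      exact mul_top _
  obtain ⟨P, -, hmax⟩ := zorn_subset_nonempty {F : Set L | IsFilter F ∧ a ∉ F} (by
    intro c hc hch hne
    refine ⟨⋃₀ c, ⟨⟨?_, ?_, ?_⟩, ?_⟩, fun s hs => Set.subset_sUnion_of_mem hs⟩
    · obtain ⟨F, hF⟩ := hne
      obtain ⟨x, hx⟩ := (hc hF).1.1
      exact ⟨x, F, hF, hx⟩
    · rintro x y ⟨F, hF, hx⟩ hxy
      exact ⟨F, hF, (hc hF).1.2.1 _ _ hx hxy⟩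
    · rintro x y ⟨F, hF, hx⟩ ⟨G, hG, hy⟩
      rcases hch.total hF hG with h | h
      · exact ⟨G, hG, (hc hG).1.2.2 _ _ (h hx) hy⟩
      · exact ⟨F, hF, (hc hF).1.2.2 _ _ hx (h hy)⟩
    · rintro ⟨F, hF, hx⟩
      exact (hc hF).2 hx) {⊤} ⟨h0, ha⟩
  obtain ⟨hP, haP⟩ := hmax.prop
  have key : ∀ x y : L, x ⊔ y ∈ P → x ∉ P → a ⊔ y ∈ P := by
    intro x y hxy hx
    by_contra h
    exact hx (hmax.le_of_ge (y := {z | z ⊔ y ∈ P}) ⟨aux_colon hP y, h⟩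
      (fun z hz => hP.2.1 _ _ hz le_sup_left) hxy)
  refine ⟨P, ⟨hP, fun h => haP (h ▸ Set.mem_univ a), ?_⟩, haP⟩
  intro x y hxy
  by_contra! h
  have h1 := key x y hxy h.1
  rw [sup_comm] at h1
  have h2 := key y a h1 h.2
  rw [sup_idem] at h2
  exact haP h2

/-- the intersection of all prime filters of `L` is `{1}`. -/
theorem sInter_primeFilters (L : Type*) [ResiduatedLattice L] :
    ⋂₀ {P : Set L | IsPrimeFilter P} = ({⊤} : Set L) := by
  ext a
  constructor
  · intro h
    by_contra ha
    obtain ⟨P, hP, haP⟩ := aux_exists (a := a) ha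
    exact haP (h P hP)
  · rintro rfl P hP
    obtain ⟨⟨p, hp⟩, hu, -⟩ := hP.1
    exact hu _ _ hp le_top

end ResiduatedLattice
end
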